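/- Let 0 < q ≤ 1, η > 0, θ ≥ 0, τ ≥ 0 and fix s > 0. Then for every k ≥ 1 and every n ≥ k, Σ_{j=0}^{k} [k choose j]_q q^{(k−j)(k−j−1)/2} p_{n−j}(x_k(s); s) = (−1)^{n−k} q^{−k(n−k)} Π_{j=0}^{k−1} A_j(x_k(s), s)/a_j. -/

import Mathlib

/-- `[n]_q = 1 + q + ⋯ + q^{n-1}`. -/
noncomputable def qnum (q : ℝ) (n : ℕ) : ℝ := ∑ i ∈ Finset.range n, q ^ i

/-- `[n]_q! = [1]_q [2]_q ⋯ [n]_q`. -/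
noncomputable def qfact (q : ℝ) (n : ℕ) : ℝ := ∏ i ∈ Finset.range n, qnum q (i + 1)

/-- q-binomial coefficient `[n choose k]_q`, with the convention that it is `0` for `k > n`. -/
noncomputable def qbinom (q : ℝ) (n k : ℕ) : ℝ :=
  if k ≤ n then qfact q n / (qfact q (n - k) * qfact q k) else 0

/-- `a_n = η⁻¹ + θ[n]_q + [n]_q² ητ`. -/
noncomputable def aCoef (η θ τ q : ℝ) (n : ℕ) : ℝ :=
  η⁻¹ + θ * qnum q n + (qnum q n) ^ 2 * η * τ

/-- `b_n(t) = (tη + θ + ([n]_q + [n-1]_q)ητ)[n]_q`. -/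
noncomputable def bCoef (η θ τ q t : ℝ) (n : ℕ) : ℝ :=
  (t * η + θ + (qnum q n + qnum q (n - 1)) * η * τ) * qnum q n

/-- `c_n(t) = η(t + τ[n-1]_q)[n]_q`. -/
noncomputable def cCoef (η τ q t : ℝ) (n : ℕ) : ℝ :=
  η * (t + τ * qnum q (n - 1)) * qnum q n

/-- `A_n(x,s) = a_n + q^n x - sη q^n [n]_q`. -/
noncomputable def ACoef (η θ τ q x s : ℝ) (n : ℕ) : ℝ :=
  aCoef η θ τ q n + q ^ n * x - s * η * q ^ n * qnum q n

/-- `x_k(s) = ((sη q^k - θ)[k]_q - η⁻¹ - ητ[k]_q²)/q^k`, the zero of `x ↦ A_k(x,s)`. -/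
noncomputable def xPt (η θ τ q s : ℝ) (k : ℕ) : ℝ :=
  ((s * η * q ^ k - θ) * qnum q k - η⁻¹ - η * τ * (qnum q k) ^ 2) / q ^ k

/-!
Let `E` be the shift `(E u) m = u (m + 1)` and let `T_k = ∏_{i < k} (1 + q ^ i E)` act on the
sequence `m ↦ p_m(x; s)`. By Gauss's binomial formula `(T_k p) (n - k)` is the sum in the theorem.
By induction on `k`, the sequence `T_k p` again satisfies a three-term recurrence, now with
leading coefficients `a_{m + k}`. Its instance at `m = 0` gives `a_k (T_{k + 1} p) 0 = A_k(x, s)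
(T_k p) 0`, which evaluates `(T_k p) 0` as a product. At a zero `x` of `A_k(·, s)` it also gives
`(T_{k + 1} p) 0 = 0`, and then the recurrence forces `T_{k + 1} p = (1 + q ^ k E) T_k p = 0`. So
`T_k p` is geometric with ratio `-q ^ (-k)`.
-/

section

variable {η θ τ q s x : ℝ} {f : ℕ → ℝ}

lemma qnum_zero (q : ℝ) : qnum q 0 = 0 := Finset.sum_range_zero _

lemma qnum_succ (q : ℝ) (n : ℕ) : qnum q (n + 1) = qnum q n + q ^ n :=
  Finset.sum_range_succ _ n

lemma qnum_add (q : ℝ) (m n : ℕ) : qnum q (m + n) = qnum q m + q ^ m * qnum q n := by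
  simp only [qnum, Finset.sum_range_add, pow_add, Finset.mul_sum]

lemma qnum_nonneg (hq : 0 ≤ q) (n : ℕ) : 0 ≤ qnum q n :=
  Finset.sum_nonneg fun _ _ => pow_nonneg hq _

lemma qnum_succ_ne_zero (hq : q ≠ -1) (n : ℕ) : qnum q (n + 1) ≠ 0 :=
  geom_sum_ne_zero hq n.succ_ne_zero

lemma qfact_zero (q : ℝ) : qfact q 0 = 1 := Finset.prod_range_zero _

lemma qfact_succ (q : ℝ) (n : ℕ) : qfact q (n + 1) = qfact q n * qnum q (n + 1) :=
  Finset.prod_range_succ _ n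

lemma qfact_ne_zero (hq : q ≠ -1) (n : ℕ) : qfact q n ≠ 0 :=
  Finset.prod_ne_zero_iff.2 fun i _ => qnum_succ_ne_zero hq i

lemma qbinom_zero_right (hq : q ≠ -1) (n : ℕ) : qbinom q n 0 = 1 := by
  simp [qbinom, qfact_zero, qfact_ne_zero hq n]

lemma qbinom_symm {n k : ℕ} (hk : k ≤ n) : qbinom q n (n - k) = qbinom q n k := by
  simp only [qbinom, hk, Nat.sub_le, if_true, Nat.sub_sub_self hk, mul_comm]

lemma qbinom_self (hq : q ≠ -1) (n : ℕ) : qbinom q n n = 1 := by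
  rw [← qbinom_symm le_rfl, Nat.sub_self, qbinom_zero_right hq]

lemma qbinom_succ_self (q : ℝ) (n : ℕ) : qbinom q n (n + 1) = 0 :=
  if_neg n.not_succ_le_self

lemma qbinom_add_left (q : ℝ) (d k : ℕ) :
    qbinom q (d + k) k = qfact q (d + k) / (qfact q d * qfact q k) := by
  simp only [qbinom, Nat.le_add_left, if_true, Nat.add_sub_cancel]

lemma qbinom_pascal (hq : q ≠ -1) {n k : ℕ} (hk : k ≤ n) :
    qbinom q (n + 1) (k + 1) = qbinom q n (k + 1) + q ^ (n - k) * qbinom q n k := by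
  obtain ⟨d, rfl⟩ := Nat.exists_eq_add_of_le' hk
  rw [Nat.add_sub_cancel]
  cases d with
  | zero => simp [qbinom_self hq, qbinom_succ_self]
  | succ d =>
    have upper : qbinom q (d + 1 + k + 1) (k + 1) =
        qfact q (d + 1 + k) * (qnum q (d + 1) + q ^ (d + 1) * qnum q (k + 1)) /
          (qfact q (d + 1) * qfact q (k + 1)) := by
      rw [← qnum_add, ← add_assoc, ← qfact_succ, add_assoc, qbinom_add_left]
    have lower_left : qbinom q (d + 1 + k) (k + 1) =
        qfact q (d + 1 + k) / (qfact q d * qfact q (k + 1)) := by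
      rw [add_assoc, add_comm 1 k, qbinom_add_left]
    rw [upper, lower_left, qbinom_add_left, qfact_succ q d, qfact_succ q k]
    have := qfact_ne_zero hq d
    have := qfact_ne_zero hq k
    have := qnum_succ_ne_zero hq d
    have := qnum_succ_ne_zero hq k
    field_simp

/-- The value at `m` of the sequence `∏_{i < k} (1 + q ^ i E) f`, where `E` is the shift
`(E f) m = f (m + 1)`. -/
def qShiftProd (q : ℝ) (f : ℕ → ℝ) : ℕ → ℕ → ℝ
  | 0, m => f m
  | k + 1, m => qShiftProd q f k m + q ^ k * qShiftProd q f k (m + 1)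

lemma qShiftProd_eq_sum_qbinom (hq : q ≠ -1) (f : ℕ → ℝ) (k m : ℕ) :
    qShiftProd q f k m =
      ∑ r ∈ Finset.range (k + 1), qbinom q k r * q ^ r.choose 2 * f (m + r) := by
  induction k generalizing m with
  | zero => simp [qShiftProd, qbinom_zero_right hq]
  | succ k ih =>
    have pascal_term : ∀ r ∈ Finset.range (k + 1),
        qbinom q (k + 1) (r + 1) * q ^ (r + 1).choose 2 * f (m + (r + 1)) =
          qbinom q k (r + 1) * q ^ (r + 1).choose 2 * f (m + (r + 1)) +
            q ^ k * (qbinom q k r * q ^ r.choose 2 * f (m + 1 + r)) := by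
      intro r hr
      have hrk : r ≤ k := Finset.mem_range_succ_iff.1 hr
      have hpow : q ^ k = q ^ (k - r) * q ^ r := by rw [← pow_add, Nat.sub_add_cancel hrk]
      rw [qbinom_pascal hq hrk, Nat.choose_succ_succ' r 1, Nat.choose_one_right, pow_add, hpow,
        add_assoc m 1 r, add_comm 1 r]
      ring
    have extend : qShiftProd q f k m =
        ∑ r ∈ Finset.range (k + 1 + 1), qbinom q k r * q ^ r.choose 2 * f (m + r) := by
      rw [Finset.sum_range_succ, qbinom_succ_self, ih]
      ring
    rw [qShiftProd, extend, ih (m + 1), Finset.sum_range_succ', Finset.sum_range_succ' _ (k + 1),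
      Finset.sum_congr rfl pascal_term, Finset.sum_add_distrib, ← Finset.mul_sum,
      qbinom_zero_right hq, qbinom_zero_right hq]
    ring

lemma sum_qbinom_eq_qShiftProd (hq : q ≠ -1) (f : ℕ → ℝ) (k m : ℕ) :
    ∑ j ∈ Finset.range (k + 1),
        qbinom q k j * q ^ ((k - j) * (k - j - 1) / 2) * f (m + k - j) = qShiftProd q f k m := by
  rw [qShiftProd_eq_sum_qbinom hq, ← Finset.sum_flip]
  refine Finset.sum_congr rfl fun j hj => ?_
  have hjk : j ≤ k := Finset.mem_range_succ_iff.1 hj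
  rw [qbinom_symm hjk, Nat.choose_two_right, Nat.sub_sub_self hjk,
    Nat.add_sub_assoc (Nat.sub_le k j), Nat.sub_sub_self hjk]

/-- The sequence `u` solves the three-term recurrence with spectral parameter `x`. At `n = 0` the
truncated subtraction replaces `u_{-1}` by `u_0`; this agrees with the convention `u_{-1} = 0`
when `c_0 = 0`. -/
def IsThreeTermRec {R : Type*} [Semiring R] (a b c : ℕ → R) (x : R) (u : ℕ → R) : Prop :=
  ∀ n, x * u n = a n * u (n + 1) + b n * u n + c n * u (n - 1)

lemma IsThreeTermRec.eq_zero {R : Type*} [Semiring R] [NoZeroDivisors R] {a b c u : ℕ → R} {x : R}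
    (h : IsThreeTermRec a b c x u) (ha : ∀ n, a n ≠ 0) (h0 : u 0 = 0) (n : ℕ) : u n = 0 := by
  induction n using Nat.strong_induction_on with
  | _ n ih =>
    cases n with
    | zero => exact h0
    | succ n =>
      have hn := h n
      rw [ih n n.lt_succ_self, ih (n - 1) (by omega)] at hn
      simpa [ha n] using hn.symm

/-- The diagonal coefficient of the three-term recurrence satisfied by `qShiftProd q f k`, when `f`
satisfies that of the polynomials `p_n`. The truncation in `m + k - 1` matters only at `m = k = 0`,
where the factor `[m]_q` vanishes. -/
noncomputable def bShift (η θ τ q s : ℝ) (k m : ℕ) : ℝ :=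
  s * η * qnum q (m + k) + (θ + (qnum q (m + k) + qnum q (m + k - 1)) * η * τ) * qnum q m

lemma bShift_zero_left (η θ τ q s : ℝ) : bShift η θ τ q s 0 = bCoef η θ τ q s := by
  ext m
  simp only [bShift, bCoef, add_zero]
  ring

lemma bShift_zero_right (η θ τ q s : ℝ) (k : ℕ) :
    bShift η θ τ q s k 0 = s * η * qnum q k := by
  simp [bShift, qnum_zero]

lemma cCoef_zero (η τ q s : ℝ) : cCoef η τ q s 0 = 0 := by
  simp [cCoef, qnum_zero]

lemma bShift_succ_right_add_aCoef (η θ τ q s : ℝ) (k m : ℕ) :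
    q ^ k * bShift η θ τ q s k (m + 1) + aCoef η θ τ q (m + k) =
      aCoef η θ τ q (m + (k + 1)) + q ^ k * bShift η θ τ q s (k + 1) m := by
  simp only [bShift, aCoef, add_right_comm m 1 k, ← add_assoc m k 1, Nat.add_sub_cancel,
    qnum_succ, pow_add]
  ring

lemma cCoef_succ_add_bShift (η θ τ q s : ℝ) (k m : ℕ) :
    q ^ k * cCoef η τ q s (m + 1) + bShift η θ τ q s k m =
      bShift η θ τ q s (k + 1) m + q ^ k * cCoef η τ q s m := by
  cases m with
  | zero =>
    simp only [cCoef, bShift, zero_add, Nat.sub_self, qnum_zero, qnum_succ, pow_zero]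
    ring
  | succ m =>
    simp only [cCoef, bShift, add_right_comm m 1, ← add_assoc, Nat.add_sub_cancel, add_comm m k,
      qnum_succ, qnum_add q k m, pow_add]
    ring

lemma isThreeTermRec_qShiftProd
    (hf : IsThreeTermRec (aCoef η θ τ q) (bCoef η θ τ q s) (cCoef η τ q s) x f) (k : ℕ) :
    IsThreeTermRec (fun m => aCoef η θ τ q (m + k)) (bShift η θ τ q s k) (cCoef η τ q s) x
      (qShiftProd q f k) := by
  induction k with
  | zero => rwa [bShift_zero_left]
  | succ k ih =>
    intro m
    have lower : cCoef η τ q s m * qShiftProd q f (k + 1) (m - 1) = cCoef η τ q s m *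
        (qShiftProd q f k (m - 1) + q ^ k * qShiftProd q f k m) := by
      cases m with
      | zero => simp only [cCoef_zero, zero_mul]
      | succ m => rfl
    have ih_succ := ih (m + 1)
    simp only [Nat.add_sub_cancel, add_right_comm m 1 k] at ih_succ
    rw [lower]
    simp only [qShiftProd, ← add_assoc]
    linear_combination ih m + q ^ k * ih_succ
      + qShiftProd q f k (m + 1) * bShift_succ_right_add_aCoef η θ τ q s k m
      + qShiftProd q f k m * cCoef_succ_add_bShift η θ τ q s k m

lemma aCoef_mul_qShiftProd_succ_zero
    (hf : IsThreeTermRec (aCoef η θ τ q) (bCoef η θ τ q s) (cCoef η τ q s) x f) (k : ℕ) :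
    aCoef η θ τ q k * qShiftProd q f (k + 1) 0 = ACoef η θ τ q x s k * qShiftProd q f k 0 := by
  have rec_zero := isThreeTermRec_qShiftProd hf k 0
  simp only [zero_add, bShift_zero_right, cCoef_zero, zero_mul, add_zero] at rec_zero
  simp only [qShiftProd, ACoef, zero_add]
  linear_combination -q ^ k * rec_zero

lemma qShiftProd_apply_zero (ha : ∀ n, aCoef η θ τ q n ≠ 0)
    (hf : IsThreeTermRec (aCoef η θ τ q) (bCoef η θ τ q s) (cCoef η τ q s) x f) (k : ℕ) :
    qShiftProd q f k 0 =
      f 0 * ∏ j ∈ Finset.range k, ACoef η θ τ q x s j / aCoef η θ τ q j := by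
  induction k with
  | zero => simp [qShiftProd]
  | succ k ih =>
    rw [Finset.prod_range_succ, ← mul_assoc, ← ih, ← mul_div_assoc, eq_div_iff (ha k), mul_comm,
      aCoef_mul_qShiftProd_succ_zero hf, mul_comm]

lemma qShiftProd_succ_eq_zero (ha : ∀ n, aCoef η θ τ q n ≠ 0)
    (hf : IsThreeTermRec (aCoef η θ τ q) (bCoef η θ τ q s) (cCoef η τ q s) x f) {k : ℕ}
    (hx : ACoef η θ τ q x s k = 0) (m : ℕ) : qShiftProd q f (k + 1) m = 0 := by
  have at_zero : qShiftProd q f (k + 1) 0 = 0 := by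
    simpa [hx, ha k] using aCoef_mul_qShiftProd_succ_zero hf k
  exact (isThreeTermRec_qShiftProd hf (k + 1)).eq_zero (fun _ => ha _) at_zero m

lemma qShiftProd_eq_of_succ_eq_zero (hq : q ≠ 0) {k : ℕ}
    (h : ∀ m, qShiftProd q f (k + 1) m = 0) (m : ℕ) :
    qShiftProd q f k m = (-1) ^ m * (q ^ (k * m))⁻¹ * qShiftProd q f k 0 := by
  induction m with
  | zero => simp
  | succ m ih =>
    have hstep : qShiftProd q f k m + q ^ k * qShiftProd q f k (m + 1) = 0 := h m
    refine mul_left_cancel₀ (pow_ne_zero k hq) ?_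
    rw [eq_neg_of_add_eq_zero_right hstep, ih, mul_add_one, pow_add, pow_succ]
    field_simp
    ring

lemma ACoef_xPt (hq : q ≠ 0) (η θ τ s : ℝ) (k : ℕ) :
    ACoef η θ τ q (xPt η θ τ q s k) s k = 0 := by
  rw [ACoef, xPt, aCoef, mul_div_cancel₀ _ (pow_ne_zero k hq)]
  ring

lemma aCoef_pos (hq : 0 ≤ q) (hη : 0 < η) (hθ : 0 ≤ θ) (hτ : 0 ≤ τ) (n : ℕ) :
    0 < aCoef η θ τ q n := by
  have := qnum_nonneg hq n
  unfold aCoef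
  positivity

theorem stmt3_general (hq0 : q ≠ 0) (hq1 : q ≠ -1) (ha : ∀ n, aCoef η θ τ q n ≠ 0)
    {p : ℕ → ℝ → ℝ} (hp0 : ∀ y, p 0 y = 1)
    (hprec : ∀ n y, y * p n y = aCoef η θ τ q n * p (n + 1) y + bCoef η θ τ q s n * p n y
      + cCoef η τ q s n * p (n - 1) y) {k n : ℕ} (hkn : k ≤ n) :
    ∑ j ∈ Finset.range (k + 1),
        qbinom q k j * q ^ ((k - j) * (k - j - 1) / 2) * p (n - j) (xPt η θ τ q s k)
      = (-1 : ℝ) ^ (n - k) * (q ^ (k * (n - k)))⁻¹ *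
          ∏ j ∈ Finset.range k, ACoef η θ τ q (xPt η θ τ q s k) s j / aCoef η θ τ q j := by
  obtain ⟨m, rfl⟩ := Nat.exists_eq_add_of_le' hkn
  have hrec : IsThreeTermRec (aCoef η θ τ q) (bCoef η θ τ q s) (cCoef η τ q s)
      (xPt η θ τ q s k) (p · (xPt η θ τ q s k)) := fun n => hprec n _
  have hzero := qShiftProd_succ_eq_zero ha hrec (ACoef_xPt hq0 η θ τ s k)
  rw [sum_qbinom_eq_qShiftProd hq1 (p · (xPt η θ τ q s k)), Nat.add_sub_cancel,
    qShiftProd_eq_of_succ_eq_zero hq0 hzero, qShiftProd_apply_zero ha hrec, hp0, one_mul]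

end

/-- for `0 < q ≤ 1`, `η > 0`, `θ ≥ 0`, `τ ≥ 0`, `s > 0`, every `k ≥ 1` and every
`n ≥ k`:
`∑_{j=0}^k [k choose j]_q q^{(k-j)(k-j-1)/2} p_{n-j}(x_k(s);s)
  = (-1)^{n-k} q^{-k(n-k)} ∏_{j=0}^{k-1} A_j(x_k(s),s)/a_j`. -/
theorem stmt3 (η θ τ q s : ℝ)
    (hq0 : 0 < q) (hq1 : q ≤ 1) (hη : 0 < η) (hθ : 0 ≤ θ) (hτ : 0 ≤ τ) (hs : 0 < s)
    (p : ℕ → ℝ → ℝ)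
    (hp0 : ∀ y : ℝ, p 0 y = 1)
    (hprec : ∀ (n : ℕ) (y : ℝ), y * p n y =
      aCoef η θ τ q n * p (n + 1) y + bCoef η θ τ q s n * p n y
        + cCoef η τ q s n * p (n - 1) y) :
    ∀ k : ℕ, 1 ≤ k → ∀ n : ℕ, k ≤ n →
      ∑ j ∈ Finset.range (k + 1),
          qbinom q k j * q ^ ((k - j) * (k - j - 1) / 2) * p (n - j) (xPt η θ τ q s k)
        = (-1 : ℝ) ^ (n - k) * (q ^ (k * (n - k)))⁻¹ *
            ∏ j ∈ Finset.range k, ACoef η θ τ q (xPt η θ τ q s k) s j / aCoef η θ τ q j :=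
  fun _ _ _ hkn =>
    stmt3_general hq0.ne' (by linarith) (fun n => (aCoef_pos hq0.le hη hθ hτ n).ne') hp0 hprec hkn
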